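/- arXiv:2009.07348 — 3 statements merged into one kernel-verified Lean document; each statement's English description precedes it below -/
import Mathlib

section
/- Let k ≥ 2 and let x, y ∈ ℤ≥0 satisfy y < T_{k−1}(τ_k(x) ∸ 2) + 2, where ∸ denotes truncated (natural number) subtraction. Then τ_k(x) ≤ τ_k(x ∸ y) + 1. -/
/-!
Pascal's rule gives `T_k(n+1) = T_k(n) + T_{k-1}(n) + 1`. Put `t = τ_k(x)` and `s = τ_k(x ∸ y)`, and
suppose `s + 2 ≤ t`. Minimality of `t` gives `x > T_k(t-1) = T_k(t-2) + T_{k-1}(t-2) + 1`, while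
`x - y ≤ T_k(s) ≤ T_k(t-2)` by monotonicity. Together they force `y ≥ T_{k-1}(t-2) + 2`, contrary
to the hypothesis on `y`.
-/

/-- `T_k(x) = Σ_{i=1}^k C(x, i)`. -/
def Tk (k x : ℕ) : ℕ := ∑ i ∈ Finset.Icc 1 k, x.choose i

/-- `τ_k(x)` is the least nonnegative integer `t` such that `x ≤ T_k(t)`. -/
noncomputable def tauk (k x : ℕ) : ℕ := sInf {t : ℕ | x ≤ Tk k t}

theorem Tk_succ_succ (k n : ℕ) : Tk (k + 1) (n + 1) = Tk (k + 1) n + Tk k n + 1 := by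
  induction k with
  | zero => simp [Tk]
  | succ k ih =>
    have h (j m : ℕ) : Tk (j + 1) m = Tk j m + m.choose (j + 1) :=
      Finset.sum_Icc_succ_top (by omega) _
    have pascal := Nat.choose_succ_succ' n (k + 1)
    have h₁ := h (k + 1) (n + 1)
    have h₂ := h (k + 1) n
    have h₃ := h k n
    omega

theorem Tk_mono (k : ℕ) : Monotone (Tk k) := fun _ _ h =>
  Finset.sum_le_sum fun i _ => Nat.choose_le_choose i h

/-- The infimum defining `τ_k(x)` is attained: `T_k(x) ≥ C(x, 1) = x`, so the set is nonempty. -/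
theorem le_Tk_tauk (k x : ℕ) (hk : 1 ≤ k) : x ≤ Tk k (tauk k x) := by
  have hne : {t : ℕ | x ≤ Tk k t}.Nonempty := by
    refine ⟨x, ?_⟩
    have h := Finset.single_le_sum (f := fun i => x.choose i) (fun i _ => Nat.zero_le _)
      (Finset.mem_Icc.mpr ⟨le_refl 1, hk⟩)
    simpa [Tk] using h
  exact Nat.sInf_mem hne

theorem Tk_lt_of_lt_tauk {k x n : ℕ} (h : n < tauk k x) : Tk k n < x :=
  not_le.mp (Nat.notMem_of_lt_sInf (s := {t : ℕ | x ≤ Tk k t}) h)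

theorem tauk_sub_le (k x y : ℕ) (hk : 2 ≤ k)
    (hy : y < Tk (k - 1) (tauk k x - 2) + 2) :
    tauk k x ≤ tauk k (x - y) + 1 := by
  by_contra! hlt
  obtain ⟨j, rfl⟩ : ∃ j, k = j + 1 := ⟨k - 1, by omega⟩
  obtain ⟨m, hm⟩ : ∃ m, tauk (j + 1) x = m + 2 := ⟨tauk (j + 1) x - 2, by omega⟩
  have h₁ : Tk (j + 1) (m + 1) < x := Tk_lt_of_lt_tauk (by omega)
  have h₂ := le_Tk_tauk (j + 1) (x - y) (by omega)
  have h₃ : Tk (j + 1) (tauk (j + 1) (x - y)) ≤ Tk (j + 1) m := Tk_mono _ (by omega)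
  rw [Tk_succ_succ] at h₁
  rw [hm, Nat.add_sub_cancel, Nat.add_sub_cancel] at hy
  omega
end

section
/- Let λ be a nonempty finite poset. Then q_2(λ) equals the minimum of Q_2(λ, u) over all λ-strategies u. -/
/-!
The idea is that strategies and their cost `Q2` unfold along the first query exactly as `qk 2` does.
A sequence `x :: u` is a strategy for `s` iff `x ∈ s` and `u` is a strategy for
`s' = {v ∈ s : ¬ x ≤ v}` (`isStrategy_cons`), and its layers are `{v ∈ s : x ≤ v}`, which has one
element more than `{v ∈ s : x < v}`, followed by the layers of `u` in `s'`. Hence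
`Q2 s (x :: u) = 1 + max (Q2 s' u) |{v ∈ s : x < v}|` (`Q2_cons`).

Comparing with the recursion for `qk 2`, where `qk 1` is the cardinality, induction on `u` gives
`qk 2 s ≤ Q2 s u` for every strategy `u`, and strong induction on `s`, always querying a minimizer
first, yields a strategy attaining equality.
-/

open Classical in
/-- The query function `q_k(λ)`: `q_k(∅) = 0`, `q_1(λ) = |λ|`, and for `k > 1` and
`λ ≠ ∅`, `q_k(λ) = 1 + min_{u ∈ λ} max {q_k(λ_{⋡u}), q_{k-1}(λ_{≻u})}`. -/
noncomputable def qk {α : Type*} [PartialOrder α] (k : ℕ) (s : Finset α) : ℕ :=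
  if h : s.Nonempty then
    if k ≤ 1 then s.card
    else 1 + s.attach.inf' (Finset.attach_nonempty_iff.mpr h) (fun u =>
      max (qk k (s.filter fun v => ¬ u.1 ≤ v))
          (qk (k - 1) (s.filter fun v => u.1 < v)))
  else 0
  termination_by (k, s.card)
  decreasing_by
  · apply Prod.Lex.right
    apply Finset.card_lt_card
    rw [Finset.filter_ssubset]
    exact ⟨u.1, u.2, by simp⟩
  · apply Prod.Lex.left
    omega

open Classical in
/-- `λ_u^{(t)} = {v ∈ λ : v ⪰ u_t and ¬(v ⪰ u_i) for all i < t}` (`t` zero-based). -/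
noncomputable def layer {α : Type*} [PartialOrder α] (s : Finset α) (u : List α)
    (t : Fin u.length) : Finset α :=
  s.filter fun v => u.get t ≤ v ∧ ∀ i : Fin u.length, i < t → ¬ u.get i ≤ v

/-- `u` is a `λ`-strategy: a sequence of elements of `λ` such that every element of `λ`
lies above some term of `u`, and all the sets `λ_u^{(t)}` are nonempty. -/
def IsStrategy {α : Type*} [PartialOrder α] (s : Finset α) (u : List α) : Prop :=
  (∀ x ∈ u, x ∈ s) ∧ (∀ v ∈ s, ∃ x ∈ u, x ≤ v) ∧
    ∀ t : Fin u.length, (layer s u t).Nonempty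

/-- `Q_2(λ, u) = max {|λ_u^{(t)}| + t - 1 : t = 1, …, r}` (here `t` is zero-based, so the
summand is `t.val` rather than `t - 1`). -/
noncomputable def Q2 {α : Type*} [PartialOrder α] (s : Finset α) (u : List α) : ℕ :=
  Finset.univ.sup fun t : Fin u.length => (layer s u t).card + t.val

section Strategy

variable {α : Type*} [PartialOrder α]

theorem qk_one (s : Finset α) : qk 1 s = s.card := by
  rw [qk]
  split_ifs with h <;> simp_all

theorem qk_empty (k : ℕ) : qk k (∅ : Finset α) = 0 := by
  rw [qk]
  simp

open Classical in
theorem qk_two {s : Finset α} (hs : s.Nonempty) :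
    qk 2 s = 1 + s.attach.inf' (Finset.attach_nonempty_iff.mpr hs) (fun u =>
      max (qk 2 (s.filter fun v => ¬ u.1 ≤ v)) (s.filter fun v => u.1 < v).card) := by
  rw [qk]
  simp [hs, qk_one]

open Classical in
theorem card_filter_le_eq {s : Finset α} {x : α} (hx : x ∈ s) :
    (s.filter fun v => x ≤ v).card = (s.filter fun v => x < v).card + 1 := by
  have h : (s.filter fun v => x ≤ v) = insert x (s.filter fun v => x < v) := by
    ext v
    simp only [Finset.mem_filter, Finset.mem_insert, le_iff_eq_or_lt]
    constructor
    · rintro ⟨hv, rfl | h⟩ <;> simp_all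
    · rintro (rfl | h) <;> simp_all
  rw [h, Finset.card_insert_of_notMem (by simp)]

open Classical in
theorem layer_cons_zero (s : Finset α) (x : α) (u : List α) :
    layer s (x :: u) (0 : Fin (u.length + 1)) = s.filter fun v => x ≤ v := by
  ext v
  simp only [layer, Finset.mem_filter]
  refine and_congr_right fun _ => ⟨fun h => h.1, fun h => ⟨h, fun i hi => ?_⟩⟩
  exact absurd hi (Nat.not_lt_zero i.val)

open Classical in
theorem layer_cons_succ (s : Finset α) (x : α) (u : List α) (t : Fin u.length) :
    layer s (x :: u) (Fin.succ t) = layer (s.filter fun v => ¬ x ≤ v) u t := by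
  ext v
  simp only [layer, Finset.mem_filter]
  have h : (∀ i : Fin (x :: u).length, i < Fin.succ t → ¬ (x :: u).get i ≤ v) ↔
      ¬ x ≤ v ∧ ∀ i : Fin u.length, i < t → ¬ u.get i ≤ v := by
    refine (Fin.forall_fin_succ (n := u.length)).trans ?_
    simp [Fin.succ_pos]
  rw [h]
  simp only [List.get_cons_succ']
  tauto

open Classical in
/-- The first term of a strategy is an arbitrary element `x ∈ s`, and the remaining terms form a
strategy for the elements not above `x`. Tail terms are automatically not above `x`, since
otherwise their layer would be empty. -/
theorem isStrategy_cons {s : Finset α} {x : α} {u : List α} :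
    IsStrategy s (x :: u) ↔ x ∈ s ∧ IsStrategy (s.filter fun v => ¬ x ≤ v) u := by
  have hl : (∀ t : Fin (x :: u).length, (layer s (x :: u) t).Nonempty) ↔
      (s.filter fun v => x ≤ v).Nonempty ∧
        ∀ t : Fin u.length, (layer (s.filter fun v => ¬ x ≤ v) u t).Nonempty := by
    refine (Fin.forall_fin_succ (n := u.length)).trans ?_
    simp only [layer_cons_zero, layer_cons_succ]
  unfold IsStrategy
  rw [hl]
  constructor
  · rintro ⟨h1, h2, -, h4⟩
    refine ⟨h1 x (by simp), fun y hy => ?_, fun v hv => ?_, h4⟩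
    · refine Finset.mem_filter.mpr ⟨h1 y (by simp [hy]), fun hxy => ?_⟩
      obtain ⟨t, rfl⟩ := List.get_of_mem hy
      obtain ⟨v, hv⟩ := h4 t
      simp only [layer, Finset.mem_filter] at hv
      exact hv.1.2 (hxy.trans hv.2.1)
    · rw [Finset.mem_filter] at hv
      obtain ⟨y, hy, hyv⟩ := h2 v hv.1
      rcases List.mem_cons.mp hy with rfl | hy
      · exact absurd hyv hv.2
      · exact ⟨y, hy, hyv⟩
  · rintro ⟨hx, h1, h2, h4⟩
    refine ⟨fun y hy => ?_, fun v hv => ?_, ⟨x, by simp [hx]⟩, h4⟩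
    · rcases List.mem_cons.mp hy with rfl | hy
      · exact hx
      · exact (Finset.mem_filter.mp (h1 y hy)).1
    · by_cases hxv : x ≤ v
      · exact ⟨x, by simp, hxv⟩
      · obtain ⟨y, hy, hyv⟩ := h2 v (by simp [hv, hxv])
        exact ⟨y, by simp [hy], hyv⟩

theorem Q2_le_iff {s : Finset α} {u : List α} {n : ℕ} :
    Q2 s u ≤ n ↔ ∀ t : Fin u.length, (layer s u t).card + t.val ≤ n := by
  simp [Q2]

open Classical in
/-- `Q2` obeys the recursion defining `qk 2`. For `u = []` the junk value `Q2 _ [] = 0` is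
harmless, because the right-hand side then is still `|{v ∈ s : x ≤ v}|`. -/
theorem Q2_cons {s : Finset α} {x : α} (hx : x ∈ s) (u : List α) :
    Q2 s (x :: u) =
      1 + max (Q2 (s.filter fun v => ¬ x ≤ v) u) (s.filter fun v => x < v).card := by
  refine eq_of_forall_ge_iff fun n => ?_
  rw [Q2_le_iff]
  refine (Fin.forall_fin_succ (n := u.length)).trans ?_
  rw [layer_cons_zero, card_filter_le_eq hx]
  simp only [layer_cons_succ, Fin.val_succ, Fin.val_zero]
  cases n with
  | zero => exact ⟨fun h => by omega, fun h => by omega⟩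
  | succ n =>
    have hn : ∀ m, 1 + m ≤ n + 1 ↔ m ≤ n := by omega
    rw [hn, max_le_iff, Q2_le_iff, and_comm]
    refine and_congr (forall_congr' fun t => ?_) ?_ <;> omega

open Classical in
theorem qk_two_le_Q2 (u : List α) : ∀ s : Finset α, IsStrategy s u → qk 2 s ≤ Q2 s u := by
  induction u with
  | nil =>
    intro s h
    -- only the empty poset is covered by the empty sequence
    have hs : s = ∅ := Finset.eq_empty_of_forall_notMem fun v hv => by
      simpa using h.2.1 v hv
    simp [hs, qk_empty]
  | cons x u ih =>
    intro s h
    obtain ⟨hx, hu⟩ := isStrategy_cons.mp h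
    rw [Q2_cons hx, qk_two ⟨x, hx⟩]
    refine Nat.add_le_add_left ?_ 1
    exact (Finset.inf'_le _ (Finset.mem_attach s ⟨x, hx⟩)).trans (max_le_max_right _ (ih _ hu))

open Classical in
/-- An optimal strategy queries a minimizer `x` of the recursion for `qk 2`, then continues
optimally on the elements not above `x`. -/
theorem exists_strategy_Q2_eq (s : Finset α) : ∃ u, IsStrategy s u ∧ Q2 s u = qk 2 s := by
  induction s using Finset.strongInduction with
  | H s ih =>
    rcases s.eq_empty_or_nonempty with rfl | hs
    · exact ⟨[], ⟨by simp, by simp, fun t => t.elim0⟩, by rw [qk_empty]; rfl⟩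
    · obtain ⟨x, -, hx⟩ := Finset.exists_mem_eq_inf' (Finset.attach_nonempty_iff.mpr hs)
        (fun u : s => max (qk 2 (s.filter fun v => ¬ u.1 ≤ v)) (s.filter fun v => u.1 < v).card)
      obtain ⟨u, hu, hQ⟩ := ih (s.filter fun v => ¬ x.1 ≤ v)
        (Finset.filter_ssubset.mpr ⟨x.1, x.2, by simp⟩)
      exact ⟨x.1 :: u, isStrategy_cons.mpr ⟨x.2, hu⟩, by rw [Q2_cons x.2, hQ, qk_two hs, hx]⟩

end Strategy

theorem q2_eq_min_Q2 {α : Type*} [PartialOrder α] (s : Finset α) (hs : s.Nonempty) :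
    qk 2 s = sInf {n : ℕ | ∃ u : List α, IsStrategy s u ∧ Q2 s u = n} := by
  have h : IsLeast {n : ℕ | ∃ u : List α, IsStrategy s u ∧ Q2 s u = n} (qk 2 s) := by
    refine ⟨exists_strategy_Q2_eq s, ?_⟩
    rintro _ ⟨u, hu, rfl⟩
    exact qk_two_le_Q2 u s hu
  exact h.csInf_eq.symm
end

section
/- Let κ and ν be finite totally ordered sets with |κ| ≤ 6 or |ν| ≤ 6, and give κ × ν the product partial order: (x₁,y₁) ⪰ (x₂,y₂) iff x₁ ≥ x₂ in κ and y₁ ≥ y₂ in ν. Then q_2(κ × ν) = 9 if |κ| = |ν| = 6, and q_2(κ × ν) = τ_2(|κ|·|ν|) otherwise. -/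
/-- The `x`-th triangular number `T_2(x) = x(x+1)/2`. -/
def T2 (x : ℕ) : ℕ := x * (x + 1) / 2

/-- `τ_2(x)` is the least nonnegative integer `t` such that `x ≤ T_2(t)`. -/
noncomputable def tau2 (x : ℕ) : ℕ := sInf {t : ℕ | x ≤ T2 t}

/-! ### General facts on `qk 2`, `T2` and `tau2` -/

open Classical in
theorem qk_two_le_zero {α : Type*} [PartialOrder α] (s : Finset α) :
    qk 2 s ≤ 0 ↔ s = ∅ := by
  rw [qk]
  by_cases h : s.Nonempty
  · simp [h, h.ne_empty]
  · simp [Finset.not_nonempty_iff_eq_empty.mp h]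

open Classical in
/-- The recursion for `qk 2` unfolded once, in a form suited to induction on the budget `t`. -/
theorem qk_two_le_succ {α : Type*} [PartialOrder α] (s : Finset α) (t : ℕ) :
    qk 2 s ≤ t + 1 ↔ s = ∅ ∨ ∃ u ∈ s, qk 2 (s.filter fun v => ¬ u ≤ v) ≤ t ∧
      (s.filter fun v => u < v).card ≤ t := by
  have h1 : ∀ r : Finset α, qk 1 r = r.card := by
    intro r
    rw [qk]
    by_cases h : r.Nonempty
    · simp [h]
    · simp [Finset.not_nonempty_iff_eq_empty.mp h]
  rw [qk]
  by_cases h : s.Nonempty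
  · simp only [h, dite_true, h.ne_empty, false_or, Nat.reduceLeDiff, if_false]
    rw [add_comm, Nat.add_le_add_iff_right, Finset.inf'_le_iff]
    simp [h1, and_left_comm]
  · simp [Finset.not_nonempty_iff_eq_empty.mp h]

theorem card_ge_eq {α : Type*} [PartialOrder α] [DecidableEq α] (s : Finset α) (u : α)
    [DecidablePred fun v => u ≤ v] [DecidablePred fun v => u < v] (hu : u ∈ s) :
    (s.filter fun v => u ≤ v).card = (s.filter fun v => u < v).card + 1 := by
  have : (s.filter fun v => u ≤ v) = insert u (s.filter fun v => u < v) := by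
    ext v
    simp only [Finset.mem_filter, Finset.mem_insert, le_iff_lt_or_eq]
    constructor
    · rintro ⟨hv, h | h⟩
      · exact Or.inr ⟨hv, h⟩
      · exact Or.inl h.symm
    · rintro (rfl | ⟨hv, h⟩)
      · exact ⟨hu, Or.inr rfl⟩
      · exact ⟨hv, Or.inl h⟩
  rw [this, Finset.card_insert_of_notMem (by simp)]

theorem two_mul_T2 (x : ℕ) : 2 * T2 x = x * (x + 1) :=
  Nat.mul_div_cancel' (Nat.even_mul_succ_self x).two_dvd

theorem T2_succ (x : ℕ) : T2 (x + 1) = T2 x + (x + 1) := by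
  have h1 := two_mul_T2 x
  have h2 := two_mul_T2 (x + 1)
  nlinarith

theorem T2_mono : Monotone T2 :=
  monotone_nat_of_le_succ fun x => by rw [T2_succ]; omega

theorem tau2_le_iff (x t : ℕ) : tau2 x ≤ t ↔ x ≤ T2 t := by
  constructor
  · intro h
    have hne : {t : ℕ | x ≤ T2 t}.Nonempty := by
      refine ⟨x, ?_⟩
      have := two_mul_T2 x
      show x ≤ T2 x
      nlinarith
    have hmem : x ≤ T2 (tau2 x) := Nat.sInf_mem hne
    exact hmem.trans (T2_mono h)
  · intro h
    exact Nat.sInf_le h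

open Classical in
/-- The counting bound: with `t` moves, of sizes at most `t, t - 1, …, 1`, at most `T2 t`
elements can be removed. -/
theorem card_le_T2 {α : Type*} [PartialOrder α] (t : ℕ) :
    ∀ s : Finset α, qk 2 s ≤ t → s.card ≤ T2 t := by
  induction t with
  | zero =>
    intro s h
    simp [(qk_two_le_zero s).mp h]
  | succ t ih =>
    intro s h
    rcases (qk_two_le_succ s t).mp h with rfl | ⟨u, hu, h1, h2⟩
    · simp
    · have h3 := ih _ h1
      have h4 := card_ge_eq s u hu
      have h5 := Finset.card_filter_add_card_filter_not (s := s) (fun v => u ≤ v)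
      rw [T2_succ]
      omega

open Classical in
/-- `qk 2` is monotone along lower subsets. If the chosen `u` lies outside the lower subset `s`, then
so does everything above `u`, and the move can be skipped. -/
theorem qk_two_mono {α : Type*} [PartialOrder α] (t : ℕ) :
    ∀ s s' : Finset α, s ⊆ s' → (∀ x ∈ s, ∀ y ∈ s', y ≤ x → y ∈ s) →
      qk 2 s' ≤ t → qk 2 s ≤ t := by
  induction t with
  | zero =>
    intro s s' hs _ h
    rw [qk_two_le_zero] at h ⊢
    subst h
    exact Finset.subset_empty.mp hs
  | succ t ih =>
    intro s s' hs hl h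
    rcases (qk_two_le_succ s' t).mp h with rfl | ⟨u, hu, h1, h2⟩
    · rw [Finset.subset_empty.mp hs]
      exact h
    · by_cases hus : u ∈ s
      · refine (qk_two_le_succ s t).mpr (Or.inr ⟨u, hus, ?_, ?_⟩)
        · refine ih _ _ (Finset.filter_subset_filter _ hs) ?_ h1
          intro x hx y hy hyx
          simp only [Finset.mem_filter] at hx hy ⊢
          exact ⟨hl x hx.1 y hy.1 hyx, hy.2⟩
        · exact (Finset.card_le_card (Finset.filter_subset_filter _ hs)).trans h2
      · refine (ih s _ ?_ ?_ h1).trans (Nat.le_succ t)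
        · intro x hx
          exact Finset.mem_filter.mpr ⟨hs hx, fun hux => hus (hl x hx u hu hux)⟩
        · intro x hx y hy hyx
          exact hl x hx y (Finset.mem_filter.mp hy).1 hyx

open Classical in
theorem qk_two_map_le {α β : Type*} [PartialOrder α] [PartialOrder β] (f : α ↪o β) (t : ℕ) :
    ∀ s : Finset α, qk 2 (s.map f.toEmbedding) ≤ t ↔ qk 2 s ≤ t := by
  induction t with
  | zero =>
    intro s
    rw [qk_two_le_zero, qk_two_le_zero, Finset.map_eq_empty]
  | succ t ih =>
    intro s
    rw [qk_two_le_succ, qk_two_le_succ, Finset.map_eq_empty]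
    simp [Finset.filter_map, ih]

theorem qk_two_map {α β : Type*} [PartialOrder α] [PartialOrder β] (f : α ↪o β)
    (s : Finset α) : qk 2 (s.map f.toEmbedding) = qk 2 s :=
  le_antisymm ((qk_two_map_le f _ s).mpr le_rfl) ((qk_two_map_le f _ s).mp le_rfl)

/-! ### Diagrams given by row lengths -/

/-- The diagram in `ℕ × ℕ` whose row `r < l.length` consists of the cells `(r, c)` with
`c < l[r]`. -/
def diag (l : List ℕ) : Finset (ℕ × ℕ) :=
  ((Finset.range l.length).sigma fun r => Finset.range (l.getD r 0)).map
    (Equiv.sigmaEquivProd ℕ ℕ).toEmbedding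

theorem mem_diag (l : List ℕ) (v : ℕ × ℕ) : v ∈ diag l ↔ v.2 < l.getD v.1 0 := by
  obtain ⟨r, c⟩ := v
  simp only [diag, Finset.mem_map_equiv, Finset.mem_sigma, Finset.mem_range]
  show (r < l.length ∧ c < l.getD r 0) ↔ c < l.getD r 0
  refine ⟨fun h => h.2, fun h => ⟨?_, h⟩⟩
  by_contra hr
  rw [List.getD_eq_default _ _ (not_lt.mp hr)] at h
  omega

theorem card_diag (l : List ℕ) : (diag l).card = l.sum := by
  rw [diag, Finset.card_map, Finset.card_sigma]
  simp only [Finset.card_range]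
  induction l with
  | nil => simp
  | cons a l ih =>
    rw [List.length_cons, Finset.sum_range_succ']
    simp only [List.getD_cons_succ, List.getD_cons_zero, List.sum_cons, ih]
    omega

/-- Row lengths after the removal of all cells `(r, c)` with `i ≤ r` and `j ≤ c`. -/
def cut (i j : ℕ) (l : List ℕ) : List ℕ := l.take i ++ (l.drop i).map (min j)

theorem getD_cut (i j r : ℕ) (l : List ℕ) :
    (cut i j l).getD r 0 = if i ≤ r then min j (l.getD r 0) else l.getD r 0 := by
  induction l generalizing i r with
  | nil => simp [cut]
  | cons a l ih =>
    cases i with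
    | zero =>
      have := ih 0 (r - 1)
      cases r <;> simp_all [cut]
    | succ i =>
      cases r with
      | zero => simp [cut]
      | succ r =>
        have := ih i r
        simp_all [cut]

theorem filter_diag (i j : ℕ) (l : List ℕ) {_ : DecidablePred fun v => ¬ (i, j) ≤ v} :
    ((diag l).filter fun v => ¬ (i, j) ≤ v) = diag (cut i j l) := by
  ext ⟨r, c⟩
  rw [Finset.mem_filter, mem_diag, mem_diag, getD_cut, Prod.mk_le_mk]
  split_ifs with h
  · simp only [h, true_and, lt_min_iff, not_le]
    tauto
  · simp [h]

theorem card_gt_diag_le {i j t : ℕ} {l : List ℕ} {_ : DecidablePred fun v => (i, j) < v}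
    (h : (i, j) ∈ diag l) :
    ((diag l).filter fun v => (i, j) < v).card ≤ t ↔ l.sum ≤ (cut i j l).sum + (t + 1) := by
  have h1 := card_ge_eq _ _ h
  have h2 := Finset.card_filter_add_card_filter_not (s := diag l) (fun v => (i, j) ≤ v)
  rw [filter_diag, card_diag, card_diag] at h2
  omega

/-- The recursion for `qk 2` on diagrams: a move at the cell `(i, j)` removes
`l.sum - (cut i j l).sum` cells. -/
theorem qk_diag_le_succ {t : ℕ} {l : List ℕ} :
    qk 2 (diag l) ≤ t + 1 ↔ diag l = ∅ ∨ ∃ i j, j < l.getD i 0 ∧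
      qk 2 (diag (cut i j l)) ≤ t ∧ l.sum ≤ (cut i j l).sum + (t + 1) := by
  rw [qk_two_le_succ]
  refine or_congr_right ⟨?_, ?_⟩
  · rintro ⟨⟨i, j⟩, hm, h1, h2⟩
    rw [filter_diag] at h1
    rw [card_gt_diag_le hm] at h2
    exact ⟨i, j, (mem_diag l (i, j)).mp hm, h1, h2⟩
  · rintro ⟨i, j, hj, h1, h2⟩
    have hm : (i, j) ∈ diag l := (mem_diag l (i, j)).mpr hj
    refine ⟨(i, j), hm, ?_, ?_⟩
    · rw [filter_diag]
      exact h1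
    · rw [card_gt_diag_le hm]
      exact h2

/-- Exhaustive search for a play that empties the diagram `l` in `t` moves, pruned by the
counting bound. -/
def canWin : ℕ → List ℕ → Bool
  | 0, l => l.sum == 0
  | t + 1, l => l.sum == 0 || (Nat.ble l.sum (T2 (t + 1)) &&
      (List.range l.length).any fun i => (List.range (l.getD i 0)).any fun j =>
        Nat.ble l.sum ((cut i j l).sum + (t + 1)) && canWin t (cut i j l))

theorem canWin_of_qk (t : ℕ) : ∀ l : List ℕ, qk 2 (diag l) ≤ t → canWin t l = true := by
  induction t with
  | zero =>
    intro l h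
    rw [qk_two_le_zero] at h
    simp [canWin, ← card_diag, h]
  | succ t ih =>
    intro l h
    have hcard := card_le_T2 _ _ h
    rw [card_diag] at hcard
    rcases qk_diag_le_succ.mp h with h | ⟨i, j, hj, h1, h2⟩
    · simp [canWin, ← card_diag, h]
    · have hi : i < l.length := by
        by_contra hi
        rw [List.getD_eq_default _ _ (not_lt.mp hi)] at hj
        omega
      rw [canWin, Bool.or_eq_true, Bool.and_eq_true]
      refine Or.inr ⟨Nat.ble_eq.mpr hcard, ?_⟩
      refine List.any_eq_true.mpr ⟨i, List.mem_range.mpr hi, ?_⟩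
      refine List.any_eq_true.mpr ⟨j, List.mem_range.mpr hj, ?_⟩
      rw [Bool.and_eq_true]
      exact ⟨Nat.ble_eq.mpr h2, ih _ h1⟩

/-- Although `6 * 6 = T2 8`, no play empties the `6 × 6` square in `8` moves. -/
theorem nine_le_qk_six : 9 ≤ qk 2 (diag (List.replicate 6 6)) := by
  by_contra h
  have h1 := canWin_of_qk 8 (List.replicate 6 6) (by omega)
  have h2 : canWin 8 (List.replicate 6 6) = false := by decide +kernel
  rw [h2] at h1
  exact Bool.noConfusion h1

/-! ### Verified plays with lengths linear in a parameter -/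

/-- The row length `N + a * k + b` encoded by the pair `(a, b)`. -/
def ev (k N : ℕ) (f : ℕ × ℕ) : ℕ := N + f.1 * k + f.2

/-- Minimum of two encoded lengths that are comparable in both coefficients. -/
def symMin (f x : ℕ × ℕ) : ℕ × ℕ := if f.1 ≤ x.1 ∧ f.2 ≤ x.2 then f else x

/-- `cut` on encoded row lengths. -/
def symCut (i : ℕ) (f : ℕ × ℕ) (s : List (ℕ × ℕ)) : List (ℕ × ℕ) :=
  s.take i ++ (s.drop i).map (symMin f)

/-- Checks that the moves `ms`, a triple `(i, a, b)` being the move at row `i` and column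
`N + a * k + b`, lead from the encoded row lengths `s` to `tgt`, where the budget is
`L * k + c` at the start and `L * k + c₀` at the end. All comparisons are made coefficientwise,
so that they hold for every `k`. -/
def checkPlay (L c₀ : ℕ) (tgt : List (ℕ × ℕ)) :
    ℕ → List (ℕ × ℕ × ℕ) → List (ℕ × ℕ) → Bool
  | c, [], s => decide (c = c₀ ∧ s = tgt)
  | 0, _ :: _, _ => false
  | c + 1, (i, f) :: ms, s =>
    decide (f.1 ≤ (s.getD i (0, 0)).1 ∧ f.2 < (s.getD i (0, 0)).2) &&
    ((s.drop i).all fun x => decide ((f.1 ≤ x.1 ∧ f.2 ≤ x.2) ∨ (x.1 ≤ f.1 ∧ x.2 ≤ f.2))) &&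
    decide ((s.map Prod.fst).sum ≤ ((symCut i f s).map Prod.fst).sum + L) &&
    decide ((s.map Prod.snd).sum ≤ ((symCut i f s).map Prod.snd).sum + (c + 1)) &&
    checkPlay L c₀ tgt c ms (symCut i f s)

theorem map_symCut (k N i : ℕ) (f : ℕ × ℕ) (s : List (ℕ × ℕ))
    (h : ∀ x ∈ s.drop i, (f.1 ≤ x.1 ∧ f.2 ≤ x.2) ∨ (x.1 ≤ f.1 ∧ x.2 ≤ f.2)) :
    (symCut i f s).map (ev k N) = cut i (ev k N f) (s.map (ev k N)) := by
  rw [symCut, cut, List.map_append, List.map_take, ← List.map_drop, List.map_map, List.map_map]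
  congr 1
  refine List.map_congr_left fun x hx => ?_
  have hmono : ∀ a b : ℕ × ℕ, a.1 ≤ b.1 ∧ a.2 ≤ b.2 → ev k N a ≤ ev k N b := by
    intro a b hab
    have := Nat.mul_le_mul_right k hab.1
    simp only [ev]
    omega
  simp only [Function.comp, symMin]
  split_ifs with hf
  · exact (min_eq_left (hmono _ _ hf)).symm
  · exact (min_eq_right (hmono _ _ ((h x hx).resolve_left hf))).symm

theorem sum_map_ev (k N : ℕ) (s : List (ℕ × ℕ)) :
    (s.map (ev k N)).sum =
      s.length * N + (s.map Prod.fst).sum * k + (s.map Prod.snd).sum := by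
  induction s with
  | nil => simp
  | cons a s ih =>
    simp only [List.map_cons, List.sum_cons, List.length_cons, ih, ev]
    ring

theorem checkPlay_sound {L c₀ : ℕ} {tgt : List (ℕ × ℕ)} (k N : ℕ)
    (hq : qk 2 (diag (tgt.map (ev k N))) ≤ L * k + c₀) (ms : List (ℕ × ℕ × ℕ)) :
    ∀ (c : ℕ) (s : List (ℕ × ℕ)), checkPlay L c₀ tgt c ms s = true →
      qk 2 (diag (s.map (ev k N))) ≤ L * k + c := by
  induction ms with
  | nil =>
    intro c s h
    simp only [checkPlay, decide_eq_true_eq] at h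
    rw [h.1, h.2]
    exact hq
  | cons mv ms ih =>
    obtain ⟨i, f⟩ := mv
    intro c s h
    cases c with
    | zero => simp [checkPlay] at h
    | succ c =>
      simp only [checkPlay, Bool.and_eq_true, decide_eq_true_eq, List.all_eq_true] at h
      obtain ⟨⟨⟨⟨h1, h2⟩, h3⟩, h4⟩, h5⟩ := h
      have hcut := map_symCut k N i f s h2
      have hrec := ih c _ h5
      rw [hcut] at hrec
      refine (qk_diag_le_succ (t := L * k + c)).mpr (Or.inr ⟨i, ev k N f, ?_, hrec, ?_⟩)
      · have hi : i < s.length := by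
          by_contra hi
          rw [List.getD_eq_default _ _ (not_lt.mp hi)] at h1
          exact absurd h1.2 (Nat.not_lt_zero _)
        rw [List.getD_eq_getElem _ _ hi] at h1
        rw [List.getD_eq_getElem _ _ (by simpa using hi), List.getElem_map]
        have := Nat.mul_le_mul_right k h1.1
        simp only [ev] at *
        omega
      · rw [← hcut, sum_map_ev, sum_map_ev]
        have hlen : (symCut i f s).length = s.length := by
          simp [symCut]
          omega
        have := Nat.mul_le_mul_right k h3
        rw [add_mul] at this
        rw [hlen]
        omega

theorem qk_diag_replicate_zero (m : ℕ) : qk 2 (diag (List.replicate m 0)) = 0 := by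
  have : diag (List.replicate m 0) = ∅ := by
    rw [← Finset.card_eq_zero, card_diag]
    simp
  rw [this]
  exact Nat.le_zero.mp ((qk_two_le_zero _).mpr rfl)

/-- Induction scheme for rectangles with `m` rows: plays for the budgets `t₀ ≤ t < B` are listed
in `base`, and for `t ≥ B` the list `step` gives, according to `t` modulo `L`, a play of `P` moves
that removes whole columns and wastes nothing, which reduces `t` to `t - P`. -/
theorem qk_rect_le (m P L B t₀ : ℕ) (base : List (List (ℕ × ℕ))) (step : List (List (ℕ × ℕ × ℕ)))
    (hm : 0 < m) (hP : 0 < P) (hL : 0 < L) (hB : t₀ + P ≤ B)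
    (hbase : ∀ x < B - t₀, (base.getD x []).length ≤ t₀ + x ∧
      checkPlay 0 (t₀ + x - (base.getD x []).length) (List.replicate m (0, 0)) (t₀ + x)
        ((base.getD x []).map fun p => (p.1, 0, p.2))
        (List.replicate m (0, T2 (t₀ + x) / m)) = true)
    (hdvd : P * L = m * (P * L / m))
    (hstep : ∀ r < L, P * (B + r - P) + T2 P = m * ((P * (B + r - P) + T2 P) / m) ∧
      checkPlay L (B + r - P) (List.replicate m (0, 0)) (B + r) (step.getD r [])
        (List.replicate m (P * L / m, (P * (B + r - P) + T2 P) / m)) = true)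
    (t : ℕ) (ht : t₀ ≤ t) : qk 2 (diag (List.replicate m (T2 t / m))) ≤ t := by
  induction t using Nat.strong_induction_on with
  | _ t ih =>
    by_cases htB : t < B
    · obtain ⟨-, h⟩ := hbase (t - t₀) (by omega)
      rw [Nat.add_sub_cancel' ht] at h
      have := checkPlay_sound 0 0 (by simp [ev, qk_diag_replicate_zero]) _ _ _ h
      simpa [ev] using this
    · set k := (t - B) / L with hk
      set r := (t - B) % L with hr
      have hdm : L * k + r = t - B := Nat.div_add_mod _ _
      have hrL : r < L := Nat.mod_lt _ hL
      obtain ⟨h1, h2⟩ := hstep r hrL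
      set F := P * L / m with hF
      set G := (P * (B + r - P) + T2 P) / m with hG
      set N := T2 (t - P) / m with hN
      have hih : qk 2 (diag (List.replicate m N)) ≤ L * k + (B + r - P) :=
        (ih (t - P) (by omega) (by omega)).trans (by omega)
      have hcol : T2 t / m = N + F * k + G := by
        have hs : t = (t - P) + P := by omega
        have hs2 : t - P = L * k + (B + r - P) := by omega
        have hT : T2 t = T2 (t - P) + P * (t - P) + T2 P := by
          have e1 := two_mul_T2 t
          have e2 := two_mul_T2 (t - P)
          have e3 := two_mul_T2 P
          generalize t - P = x at *
          subst hs
          nlinarith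
        have : T2 t = T2 (t - P) + m * (F * k + G) := by
          rw [hT, hs2]
          linear_combination k * hdvd + h1
        rw [this, Nat.add_mul_div_left _ _ hm]
        omega
      have := checkPlay_sound (tgt := List.replicate m (0, 0)) k N
        (by simpa [ev] using hih) _ _ _ h2
      rw [List.map_replicate] at this
      rw [hcol]
      exact this.trans (by omega)

/-! ### Explicit plays -/

/-- Play on `1` row: the entry for `t` empties the `1 × ⌊T2 t / 1⌋` rectangle within `t` moves,
for `0 ≤ t < 1`. Entries are lists of cells `(i, j)`. -/
def base1 : List (List (ℕ × ℕ)) := [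
  []]

/-- Periodic play on `1` row: entry `r` describes 1 lossless move starting with the
budget `t = 1 * k + 1 + r`, in the encoding of `checkPlay`. -/
def step1 : List (List (ℕ × ℕ × ℕ)) := [
  [(0, 0, 0)]]

/-- Play on `2` rows: the entry for `t` empties the `2 × ⌊T2 t / 2⌋` rectangle within `t` moves,
for `0 ≤ t < 8`. Entries are lists of cells `(i, j)`. -/
def base2 : List (List (ℕ × ℕ)) := [
  [],
  [],
  [(0, 0)],
  [(1, 0), (0, 1), (0, 0)],
  [(0, 3), (1, 0), (0, 1), (0, 0)],
  [(1, 2), (0, 3), (0, 1), (0, 0)],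
  [(0, 7), (1, 2), (0, 3), (0, 1), (0, 0)],
  [(1, 7), (0, 8), (0, 5), (0, 3), (1, 0), (0, 1), (0, 0)]]

/-- Periodic play on `2` rows: entry `r` describes 4 lossless moves starting with the
budget `t = 2 * k + 8 + r`, in the encoding of `checkPlay`. -/
def step2 : List (List (ℕ × ℕ × ℕ)) := [
  [(0, 3, 9), (1, 1, 2), (0, 1, 3), (0, 0, 0)],
  [(1, 2, 6), (0, 2, 7), (0, 1, 3), (0, 0, 0)]]

/-- Play on `3` rows: the entry for `t` empties the `3 × ⌊T2 t / 3⌋` rectangle within `t` moves,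
for `0 ≤ t < 20`. Entries are lists of cells `(i, j)`. -/
def base3 : List (List (ℕ × ℕ)) := [
  [],
  [],
  [(1, 0), (0, 0)],
  [(0, 1), (1, 0), (0, 0)],
  [(1, 1), (0, 1), (1, 0), (0, 0)],
  [(2, 0), (0, 3), (1, 0), (0, 1), (0, 0)],
  [(0, 5), (2, 0), (0, 3), (1, 0), (0, 1), (0, 0)],
  [(2, 2), (0, 6), (0, 4), (0, 2), (0, 1), (1, 0), (0, 0)],
  [(1, 8), (0, 7), (0, 5), (2, 0), (0, 3), (1, 0), (0, 1), (0, 0)],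
  [(0, 12), (1, 8), (0, 7), (0, 5), (2, 0), (0, 3), (1, 0), (0, 1), (0, 0)],
  [(1, 13), (2, 4), (1, 5), (0, 11), (0, 5), (0, 3), (1, 1), (0, 1), (1, 0), (0, 0)],
  [(2, 11), (0, 17), (2, 2), (0, 13), (1, 6), (0, 7), (0, 4), (0, 2), (0, 1), (1, 0), (0, 0)],
  [(0, 22), (2, 11), (0, 17), (2, 2), (0, 13), (1, 6), (0, 7), (0, 4), (0, 2), (0, 1), (1, 0),
    (0, 0)],
  [(2, 17), (0, 24), (1, 15), (1, 10), (0, 15), (0, 9), (2, 2), (0, 6), (0, 4), (0, 2), (0, 1),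
    (1, 0), (0, 0)],
  [(1, 28), (0, 26), (0, 22), (2, 11), (0, 17), (2, 2), (0, 13), (1, 6), (0, 7), (0, 4), (0, 2),
    (0, 1), (1, 0), (0, 0)],
  [(0, 35), (1, 28), (0, 26), (0, 22), (2, 11), (0, 17), (2, 2), (0, 13), (1, 6), (0, 7),
    (0, 4), (0, 2), (0, 1), (1, 0), (0, 0)],
  [(1, 37), (2, 22), (0, 34), (2, 9), (0, 28), (1, 17), (0, 18), (0, 13), (0, 9), (2, 2),
    (0, 6), (0, 4), (0, 2), (0, 1), (1, 0), (0, 0)],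
  [(2, 34), (0, 43), (1, 31), (1, 24), (0, 30), (0, 22), (2, 11), (0, 17), (2, 2), (0, 13),
    (1, 6), (0, 7), (0, 4), (0, 2), (0, 1), (1, 0), (0, 0)],
  [(0, 51), (2, 34), (0, 43), (1, 31), (1, 24), (0, 30), (0, 22), (2, 11), (0, 17), (2, 2),
    (0, 13), (1, 6), (0, 7), (0, 4), (0, 2), (0, 1), (1, 0), (0, 0)],
  [(2, 44), (0, 54), (2, 27), (0, 46), (1, 31), (0, 32), (2, 14), (1, 19), (0, 21), (0, 15),
    (1, 10), (0, 9), (2, 2), (0, 6), (0, 4), (0, 2), (0, 1), (1, 0), (0, 0)]]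

/-- Periodic play on `3` rows: entry `r` describes 9 lossless moves starting with the
budget `t = 4 * k + 20 + r`, in the encoding of `checkPlay`. -/
def step3 : List (List (ℕ × ℕ × ℕ)) := [
  [(2, 8, 28), (2, 4, 9), (0, 10, 39), (1, 6, 22), (0, 6, 23), (1, 3, 8), (1, 1, 1), (0, 2, 10),
    (0, 0, 0)],
  [(2, 8, 30), (0, 10, 41), (1, 7, 26), (1, 5, 17), (0, 6, 24), (2, 1, 1), (1, 1, 2),
    (0, 2, 10), (0, 0, 0)],
  [(2, 8, 32), (1, 8, 33), (2, 4, 12), (0, 8, 35), (0, 6, 25), (1, 3, 10), (1, 1, 2),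
    (0, 2, 10), (0, 0, 0)],
  [(2, 8, 34), (0, 10, 46), (2, 4, 13), (1, 6, 26), (1, 3, 10), (1, 1, 1), (0, 6, 29),
    (0, 2, 13), (0, 0, 0)]]

/-- Play on `4` rows: the entry for `t` empties the `4 × ⌊T2 t / 4⌋` rectangle within `t` moves,
for `0 ≤ t < 32`. Entries are lists of cells `(i, j)`. -/
def base4 : List (List (ℕ × ℕ)) := [
  [],
  [],
  [],
  [(1, 0), (0, 0)],
  [(0, 1), (1, 0), (0, 0)],
  [(0, 2), (0, 1), (1, 0), (0, 0)],
  [(2, 2), (0, 3), (1, 1), (1, 0), (0, 1), (0, 0)],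
  [(3, 0), (0, 5), (2, 0), (0, 3), (1, 0), (0, 1), (0, 0)],
  [(0, 7), (3, 0), (0, 5), (2, 0), (0, 3), (1, 0), (0, 1), (0, 0)],
  [(1, 8), (2, 4), (0, 6), (2, 1), (1, 1), (0, 2), (1, 0), (0, 0)],
  [(2, 8), (0, 9), (2, 4), (0, 6), (2, 1), (1, 1), (0, 2), (1, 0), (0, 0)],
  [(3, 5), (1, 11), (0, 10), (1, 6), (0, 5), (2, 2), (0, 3), (1, 1), (1, 0), (0, 1), (0, 0)],
  [(0, 16), (3, 5), (1, 11), (0, 10), (1, 6), (0, 5), (2, 2), (0, 3), (1, 1), (1, 0), (0, 1),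
    (0, 0)],
  [(3, 9), (0, 18), (2, 8), (0, 13), (0, 9), (2, 4), (0, 6), (2, 1), (1, 1), (0, 2), (1, 0),
    (0, 0)],
  [(2, 19), (1, 17), (1, 13), (0, 15), (0, 11), (1, 8), (2, 4), (0, 6), (2, 1), (1, 1), (0, 2),
    (1, 0), (0, 0)],
  [(1, 25), (2, 18), (0, 21), (1, 15), (3, 4), (1, 10), (0, 12), (1, 6), (1, 3), (1, 1), (0, 7),
    (0, 3), (1, 0), (0, 1), (0, 0)],
  [(0, 30), (1, 25), (2, 18), (0, 21), (1, 15), (3, 4), (1, 10), (0, 12), (1, 6), (1, 3),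
    (1, 1), (0, 7), (0, 3), (1, 0), (0, 1), (0, 0)],
  [(3, 21), (1, 30), (2, 18), (0, 27), (3, 5), (0, 21), (1, 14), (0, 13), (0, 10), (1, 6),
    (0, 5), (2, 2), (0, 3), (1, 1), (1, 0), (0, 1), (0, 0)],
  [(1, 36), (3, 19), (1, 28), (2, 16), (0, 28), (3, 3), (0, 22), (2, 5), (0, 17), (1, 8),
    (0, 9), (0, 5), (0, 3), (0, 2), (0, 1), (1, 0), (0, 0)],
  [(3, 28), (0, 41), (2, 26), (0, 33), (3, 11), (0, 26), (2, 13), (0, 20), (1, 11), (2, 6),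
    (0, 11), (0, 7), (1, 4), (1, 2), (0, 2), (0, 1), (1, 0), (0, 0)],
  [(0, 47), (3, 28), (0, 41), (2, 26), (0, 33), (3, 11), (0, 26), (2, 13), (0, 20), (1, 11),
    (2, 6), (0, 11), (0, 7), (1, 4), (1, 2), (0, 2), (0, 1), (1, 0), (0, 0)],
  [(1, 50), (2, 40), (0, 44), (2, 31), (3, 14), (0, 36), (1, 26), (1, 19), (0, 23), (3, 2),
    (2, 8), (0, 16), (0, 12), (0, 8), (0, 6), (1, 3), (1, 1), (0, 2), (1, 0), (0, 0)],
  [(2, 52), (3, 31), (0, 53), (1, 43), (1, 34), (0, 36), (3, 15), (2, 19), (0, 28), (1, 17),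
    (2, 10), (0, 17), (0, 12), (3, 1), (1, 7), (1, 4), (0, 6), (0, 3), (1, 1), (1, 0), (0, 1),
    (0, 0)],
  [(3, 46), (1, 58), (3, 25), (0, 55), (2, 36), (0, 46), (2, 22), (0, 38), (1, 23), (0, 24),
    (1, 18), (1, 14), (3, 3), (0, 14), (0, 11), (2, 3), (1, 4), (2, 0), (0, 6), (0, 3), (1, 0),
    (0, 1), (0, 0)],
  [(0, 69), (3, 46), (1, 58), (3, 25), (0, 55), (2, 36), (0, 46), (2, 22), (0, 38), (1, 23),
    (0, 24), (1, 18), (1, 14), (3, 3), (0, 14), (0, 11), (2, 3), (1, 4), (2, 0), (0, 6), (0, 3),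
    (1, 0), (0, 1), (0, 0)],
  [(3, 56), (0, 73), (2, 53), (0, 62), (1, 49), (2, 39), (0, 46), (0, 38), (3, 21), (1, 30),
    (2, 18), (0, 27), (3, 5), (0, 21), (1, 14), (0, 13), (0, 10), (1, 6), (0, 5), (2, 2),
    (0, 3), (1, 1), (1, 0), (0, 1), (0, 0)],
  [(2, 74), (1, 70), (1, 62), (0, 64), (0, 57), (1, 50), (2, 40), (0, 44), (2, 31), (3, 14),
    (0, 36), (1, 26), (1, 19), (0, 23), (3, 2), (2, 8), (0, 16), (0, 12), (0, 8), (0, 6),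
    (1, 3), (1, 1), (0, 2), (1, 0), (0, 0)],
  [(1, 85), (2, 72), (0, 77), (2, 60), (1, 58), (2, 47), (0, 57), (0, 47), (3, 28), (0, 41),
    (2, 26), (0, 33), (3, 11), (0, 26), (2, 13), (0, 20), (1, 11), (2, 6), (0, 11), (0, 7),
    (1, 4), (1, 2), (0, 2), (0, 1), (1, 0), (0, 0)],
  [(0, 94), (1, 85), (2, 72), (0, 77), (2, 60), (1, 58), (2, 47), (0, 57), (0, 47), (3, 28),
    (0, 41), (2, 26), (0, 33), (3, 11), (0, 26), (2, 13), (0, 20), (1, 11), (2, 6), (0, 11),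
    (0, 7), (1, 4), (1, 2), (0, 2), (0, 1), (1, 0), (0, 0)],
  [(3, 79), (1, 94), (2, 73), (0, 88), (3, 48), (0, 76), (1, 63), (0, 60), (0, 53), (3, 28),
    (2, 34), (0, 44), (3, 11), (0, 36), (2, 19), (0, 29), (0, 23), (1, 15), (0, 14), (3, 1),
    (0, 11), (1, 7), (0, 6), (0, 4), (2, 0), (0, 2), (0, 1), (0, 0)],
  [(1, 106), (3, 77), (0, 100), (0, 91), (1, 78), (2, 65), (2, 53), (0, 73), (0, 62), (1, 49),
    (2, 39), (0, 46), (0, 38), (3, 21), (1, 30), (2, 18), (0, 27), (3, 5), (0, 21), (1, 14),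
    (0, 13), (0, 10), (1, 6), (0, 5), (2, 2), (0, 3), (1, 1), (1, 0), (0, 1), (0, 0)],
  [(3, 93), (0, 114), (2, 89), (0, 100), (3, 62), (2, 63), (1, 75), (0, 76), (0, 64), (3, 40),
    (1, 53), (0, 50), (3, 21), (0, 44), (2, 27), (0, 36), (1, 24), (3, 7), (2, 11), (0, 24),
    (1, 13), (1, 7), (0, 15), (0, 7), (3, 0), (0, 5), (2, 0), (0, 3), (1, 0), (0, 1), (0, 0)]]

/-- Periodic play on `4` rows: entry `r` describes 16 lossless moves starting with the
budget `t = 4 * k + 32 + r`, in the encoding of `checkPlay`. -/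
def step4 : List (List (ℕ × ℕ × ℕ)) := [
  [(0, 15, 90), (3, 11, 59), (1, 13, 75), (3, 7, 30), (1, 11, 61), (0, 11, 63), (2, 7, 35),
    (1, 7, 36), (0, 7, 39), (2, 5, 21), (2, 3, 10), (0, 5, 27), (2, 1, 0), (1, 1, 8), (0, 1, 9),
    (0, 0, 0)],
  [(3, 12, 69), (1, 14, 86), (2, 11, 62), (0, 13, 79), (3, 7, 33), (0, 11, 65), (1, 9, 50),
    (1, 7, 37), (0, 7, 40), (2, 5, 23), (0, 5, 27), (3, 1, 1), (2, 1, 2), (1, 1, 7), (0, 1, 8),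
    (0, 0, 0)],
  [(2, 14, 89), (3, 10, 56), (0, 14, 90), (1, 12, 74), (1, 10, 59), (2, 8, 43), (3, 4, 15),
    (0, 10, 63), (0, 8, 48), (1, 6, 33), (2, 3, 12), (0, 5, 29), (2, 1, 1), (1, 1, 8),
    (0, 1, 9), (0, 0, 0)],
  [(3, 12, 75), (1, 14, 93), (3, 8, 42), (1, 12, 77), (0, 12, 79), (1, 10, 62), (3, 4, 13),
    (1, 8, 48), (0, 8, 52), (2, 4, 22), (2, 2, 5), (0, 6, 38), (1, 2, 15), (0, 2, 16),
    (0, 1, 5), (0, 0, 0)]]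

/-- Play on `5` rows: the entry for `t` empties the `5 × ⌊T2 t / 5⌋` rectangle within `t` moves,
for `0 ≤ t < 20`. Entries are lists of cells `(i, j)`. -/
def base5 : List (List (ℕ × ℕ)) := [
  [],
  [],
  [],
  [(2, 0), (0, 0)],
  [(3, 0), (0, 1), (1, 0), (0, 0)],
  [(0, 2), (3, 0), (0, 1), (1, 0), (0, 0)],
  [(2, 2), (0, 2), (3, 0), (0, 1), (1, 0), (0, 0)],
  [(2, 3), (1, 2), (1, 1), (0, 1), (2, 0), (0, 0)],
  [(1, 5), (0, 4), (2, 2), (0, 2), (3, 0), (0, 1), (1, 0), (0, 0)],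
  [(2, 6), (3, 2), (2, 1), (0, 6), (1, 1), (1, 0), (0, 3), (0, 1), (0, 0)],
  [(0, 9), (2, 6), (3, 2), (2, 1), (0, 6), (1, 1), (1, 0), (0, 3), (0, 1), (0, 0)],
  [(4, 2), (2, 8), (0, 9), (2, 4), (2, 1), (0, 6), (1, 1), (1, 0), (0, 3), (0, 1), (0, 0)],
  [(1, 12), (4, 1), (2, 7), (0, 9), (0, 6), (3, 0), (0, 4), (1, 2), (1, 0), (0, 1), (0, 0)],
  [(4, 5), (0, 15), (2, 10), (0, 10), (3, 3), (1, 6), (0, 5), (0, 3), (0, 2), (3, 0), (0, 1),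
    (1, 0), (0, 0)],
  [(3, 14), (2, 12), (0, 15), (0, 11), (0, 9), (2, 6), (3, 2), (2, 1), (0, 6), (1, 1), (1, 0),
    (0, 3), (0, 1), (0, 0)],
  [(0, 21), (3, 14), (2, 12), (0, 15), (0, 11), (0, 9), (2, 6), (3, 2), (2, 1), (0, 6), (1, 1),
    (1, 0), (0, 3), (0, 1), (0, 0)],
  [(1, 23), (2, 18), (0, 18), (4, 5), (0, 15), (2, 10), (0, 10), (3, 3), (1, 6), (0, 5), (0, 3),
    (0, 2), (3, 0), (0, 1), (1, 0), (0, 0)],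
  [(4, 13), (0, 26), (1, 21), (2, 14), (0, 17), (4, 1), (3, 3), (2, 4), (1, 8), (0, 9), (0, 5),
    (1, 2), (2, 0), (0, 2), (0, 1), (0, 0)],
  [(2, 28), (0, 27), (1, 23), (2, 18), (0, 18), (4, 5), (0, 15), (2, 10), (0, 10), (3, 3),
    (1, 6), (0, 5), (0, 3), (0, 2), (3, 0), (0, 1), (1, 0), (0, 0)],
  [(4, 19), (1, 32), (3, 17), (1, 24), (4, 2), (0, 24), (2, 14), (0, 18), (3, 3), (2, 4),
    (1, 9), (0, 10), (0, 6), (2, 1), (1, 1), (1, 0), (0, 3), (0, 1), (0, 0)]]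

/-- Periodic play on `5` rows: entry `r` describes 10 lossless moves starting with the
budget `t = 24 * k + 20 + r`, in the encoding of `checkPlay`. -/
def step5 : List (List (ℕ × ℕ × ℕ)) := [
  [(3, 36, 21), (2, 32, 18), (0, 36, 22), (4, 8, 1), (0, 28, 16), (1, 20, 11), (2, 8, 4),
    (0, 12, 7), (1, 3, 1), (0, 0, 0)],
  [(4, 24, 12), (2, 36, 23), (1, 32, 20), (1, 24, 14), (0, 24, 16), (2, 16, 8), (2, 8, 3),
    (0, 12, 8), (1, 3, 1), (0, 0, 0)],
  [(3, 36, 24), (0, 40, 28), (1, 32, 21), (4, 8, 2), (1, 24, 15), (3, 4, 0), (1, 12, 7),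
    (0, 16, 13), (1, 2, 0), (0, 0, 0)],
  [(4, 24, 14), (3, 24, 15), (2, 24, 16), (0, 36, 27), (3, 12, 5), (0, 24, 18), (2, 8, 3),
    (0, 12, 10), (1, 3, 1), (0, 0, 0)],
  [(1, 42, 33), (4, 18, 10), (3, 18, 11), (0, 36, 28), (1, 24, 18), (3, 6, 1), (1, 12, 9),
    (0, 12, 11), (1, 3, 1), (0, 0, 0)],
  [(4, 24, 16), (0, 42, 35), (3, 21, 14), (3, 9, 3), (2, 18, 14), (2, 4, 0), (1, 18, 16),
    (0, 18, 17), (0, 6, 8), (0, 0, 0)],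
  [(3, 36, 30), (2, 32, 26), (0, 36, 31), (4, 8, 3), (3, 8, 4), (1, 22, 18), (1, 10, 8),
    (1, 3, 1), (0, 12, 13), (0, 0, 0)],
  [(4, 24, 18), (3, 24, 19), (2, 24, 20), (0, 36, 33), (3, 12, 7), (2, 8, 4), (1, 12, 12),
    (1, 3, 1), (0, 12, 14), (0, 0, 0)],
  [(1, 42, 40), (2, 34, 31), (3, 22, 18), (2, 18, 14), (1, 18, 16), (0, 24, 24), (3, 6, 3),
    (0, 12, 11), (1, 3, 2), (0, 0, 0)],
  [(4, 24, 20), (2, 36, 35), (3, 18, 14), (3, 6, 1), (2, 12, 10), (0, 36, 37), (1, 12, 14),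
    (1, 3, 1), (0, 12, 16), (0, 0, 0)],
  [(3, 36, 36), (4, 12, 7), (1, 36, 37), (2, 24, 23), (2, 12, 10), (1, 12, 12), (2, 4, 1),
    (0, 24, 28), (0, 6, 9), (0, 0, 0)],
  [(4, 24, 22), (3, 24, 23), (2, 24, 24), (1, 24, 25), (3, 12, 9), (0, 24, 27), (1, 12, 12),
    (2, 4, 2), (0, 6, 8), (0, 0, 0)],
  [(1, 42, 47), (4, 18, 16), (3, 18, 17), (0, 36, 40), (1, 24, 26), (3, 6, 3), (1, 12, 13),
    (0, 12, 15), (1, 3, 2), (0, 0, 0)],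
  [(4, 24, 24), (0, 42, 49), (3, 21, 21), (3, 9, 6), (2, 18, 20), (0, 30, 35), (1, 12, 14),
    (2, 2, 0), (0, 9, 12), (0, 0, 0)],
  [(3, 36, 42), (0, 40, 48), (1, 32, 37), (4, 8, 6), (1, 24, 27), (3, 4, 2), (1, 12, 13),
    (0, 16, 21), (1, 2, 1), (0, 0, 0)],
  [(4, 24, 26), (3, 24, 27), (3, 12, 10), (1, 36, 45), (2, 12, 14), (1, 12, 15), (0, 24, 32),
    (2, 4, 2), (0, 6, 10), (0, 0, 0)],
  [(1, 42, 54), (4, 18, 19), (2, 30, 37), (0, 33, 42), (2, 18, 21), (2, 10, 10), (2, 2, 0),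
    (1, 9, 13), (0, 9, 14), (0, 0, 0)],
  [(4, 24, 28), (2, 36, 47), (3, 18, 20), (3, 6, 3), (2, 12, 14), (0, 36, 49), (1, 12, 18),
    (1, 3, 2), (0, 12, 20), (0, 0, 0)],
  [(3, 36, 48), (2, 32, 42), (0, 36, 49), (1, 27, 35), (4, 3, 1), (1, 19, 24), (2, 7, 8),
    (1, 3, 3), (0, 12, 19), (0, 0, 0)],
  [(4, 24, 30), (3, 24, 31), (3, 12, 12), (0, 40, 57), (2, 16, 22), (1, 16, 23), (1, 8, 9),
    (1, 2, 1), (0, 16, 26), (0, 0, 0)],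
  [(1, 42, 61), (4, 18, 22), (2, 30, 42), (1, 26, 36), (1, 18, 24), (0, 24, 36), (2, 10, 12),
    (2, 2, 1), (0, 9, 14), (0, 0, 0)],
  [(4, 24, 32), (0, 42, 63), (3, 21, 28), (3, 9, 9), (2, 18, 26), (0, 30, 45), (2, 4, 3),
    (1, 6, 11), (0, 6, 12), (0, 0, 0)],
  [(3, 36, 54), (4, 12, 13), (1, 36, 55), (2, 24, 35), (2, 12, 16), (1, 12, 18), (2, 4, 3),
    (0, 24, 40), (0, 6, 12), (0, 0, 0)],
  [(4, 24, 34), (3, 24, 35), (2, 24, 36), (0, 36, 57), (2, 16, 22), (3, 4, 3), (1, 14, 21),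
    (1, 3, 3), (0, 12, 22), (0, 0, 0)]]

/-- Play on `6` rows: the entry for `t` empties the `6 × ⌊T2 t / 6⌋` rectangle within `t` moves,
for `9 ≤ t < 24`, the first entry being for `t = 9`. Entries are lists of cells `(i, j)`. -/
def base6 : List (List (ℕ × ℕ)) := [
  [(3, 4), (4, 0), (2, 2), (0, 4), (1, 1), (0, 1), (1, 0), (0, 0)],
  [(1, 7), (3, 4), (0, 5), (1, 3), (3, 1), (0, 2), (0, 1), (3, 0), (1, 0), (0, 0)],
  [(5, 0), (0, 9), (2, 6), (3, 2), (2, 1), (0, 6), (1, 1), (1, 0), (0, 3), (0, 1), (0, 0)],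
  [(0, 11), (5, 0), (0, 9), (2, 6), (3, 2), (2, 1), (0, 6), (1, 1), (1, 0), (0, 3), (0, 1),
    (0, 0)],
  [(5, 2), (1, 12), (3, 7), (1, 7), (4, 0), (0, 7), (3, 0), (0, 5), (2, 0), (0, 3), (1, 0),
    (0, 1), (0, 0)],
  [(4, 10), (3, 8), (0, 13), (1, 8), (1, 6), (3, 3), (0, 6), (2, 2), (0, 3), (2, 1), (0, 1),
    (3, 0), (1, 0), (0, 0)],
  [(1, 17), (4, 10), (3, 8), (1, 11), (1, 7), (1, 5), (0, 11), (2, 3), (1, 2), (0, 5), (1, 1),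
    (0, 1), (3, 0), (1, 0), (0, 0)],
  [(2, 18), (3, 13), (0, 16), (5, 0), (2, 10), (0, 11), (3, 5), (1, 6), (0, 5), (2, 3), (1, 2),
    (1, 1), (0, 1), (2, 0), (0, 0)],
  [(5, 8), (1, 21), (2, 16), (0, 16), (1, 13), (1, 10), (0, 9), (1, 7), (3, 4), (0, 5), (1, 3),
    (3, 1), (0, 2), (0, 1), (3, 0), (1, 0), (0, 0)],
  [(0, 25), (5, 8), (1, 21), (2, 16), (0, 16), (1, 13), (1, 10), (0, 9), (1, 7), (3, 4), (0, 5),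
    (1, 3), (3, 1), (0, 2), (0, 1), (3, 0), (1, 0), (0, 0)],
  [(5, 12), (2, 25), (0, 24), (1, 20), (2, 15), (0, 15), (2, 11), (2, 8), (0, 10), (0, 7),
    (3, 4), (4, 0), (2, 2), (0, 4), (1, 1), (0, 1), (1, 0), (0, 0)],
  [(1, 31), (5, 12), (2, 25), (4, 10), (0, 25), (1, 20), (2, 13), (0, 16), (3, 7), (1, 9),
    (0, 8), (2, 5), (4, 1), (3, 0), (0, 5), (2, 0), (0, 3), (1, 0), (0, 1), (0, 0)],
  [(3, 31), (4, 21), (2, 25), (0, 29), (5, 4), (0, 23), (4, 6), (2, 16), (1, 14), (1, 10),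
    (0, 12), (0, 8), (3, 3), (1, 4), (0, 3), (0, 2), (1, 1), (2, 0), (0, 0)],
  [(4, 31), (1, 35), (2, 28), (0, 29), (3, 22), (0, 23), (4, 14), (0, 19), (2, 13), (5, 0),
    (0, 13), (4, 2), (2, 8), (0, 9), (2, 4), (2, 1), (0, 6), (1, 1), (1, 0), (0, 3), (0, 1),
    (0, 0)],
  [(5, 23), (3, 35), (0, 39), (1, 32), (4, 18), (1, 26), (0, 25), (0, 21), (3, 14), (1, 14),
    (0, 13), (0, 11), (5, 0), (0, 9), (2, 6), (3, 2), (2, 1), (0, 6), (1, 1), (1, 0), (0, 3),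
    (0, 1), (0, 0)]]

/-- Periodic play on `6` rows: entry `r` describes 12 lossless moves starting with the
budget `t = 6 * k + 24 + r`, in the encoding of `checkPlay`. -/
def step6 : List (List (ℕ × ℕ × ℕ)) := [
  [(0, 11, 33), (5, 5, 10), (4, 5, 11), (1, 9, 26), (2, 6, 16), (4, 2, 1), (2, 3, 7),
    (0, 7, 21), (2, 1, 0), (1, 1, 6), (0, 1, 7), (0, 0, 0)],
  [(5, 6, 14), (4, 6, 15), (4, 3, 3), (3, 6, 17), (0, 10, 32), (3, 2, 1), (2, 4, 13),
    (1, 4, 14), (0, 4, 15), (2, 1, 0), (0, 1, 7), (0, 0, 0)],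
  [(4, 9, 28), (3, 8, 24), (0, 10, 33), (5, 2, 1), (4, 2, 2), (2, 6, 18), (2, 3, 8), (2, 1, 0),
    (0, 7, 24), (1, 1, 7), (0, 1, 8), (0, 0, 0)],
  [(3, 10, 34), (5, 4, 8), (4, 4, 9), (0, 10, 35), (3, 4, 11), (2, 4, 13), (1, 4, 14),
    (0, 4, 15), (3, 2, 3), (2, 1, 1), (0, 1, 6), (0, 0, 0)],
  [(4, 9, 31), (5, 3, 4), (4, 3, 5), (3, 6, 20), (0, 10, 37), (3, 2, 2), (2, 4, 15), (2, 1, 0),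
    (0, 7, 27), (1, 1, 8), (0, 1, 9), (0, 0, 0)],
  [(5, 6, 18), (3, 9, 33), (0, 10, 38), (3, 6, 20), (3, 4, 11), (2, 4, 14), (1, 4, 15),
    (4, 1, 0), (2, 1, 2), (0, 4, 18), (0, 1, 7), (0, 0, 0)]]

/-! ### The value for rectangles -/

theorem qk_rect_mono {m n n' t : ℕ} (h : n ≤ n')
    (hq : qk 2 (diag (List.replicate m n')) ≤ t) : qk 2 (diag (List.replicate m n)) ≤ t := by
  have hmem : ∀ (p : ℕ) (v : ℕ × ℕ),
      v ∈ diag (List.replicate m p) ↔ v.1 < m ∧ v.2 < p := by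
    intro p v
    rw [mem_diag]
    by_cases hv : v.1 < m
    · simp [List.getD, hv]
    · simp [List.getD, hv]
  refine qk_two_mono t _ _ ?_ ?_ hq
  · intro v hv
    rw [hmem] at hv ⊢
    omega
  · intro x hx y hy hyx
    rw [hmem] at hx hy ⊢
    exact ⟨hy.1, lt_of_le_of_lt hyx.2 hx.2⟩

theorem qk_rect_le_five {m : ℕ} (hm : m ≤ 5) (hm0 : 0 < m) (t : ℕ) :
    qk 2 (diag (List.replicate m (T2 t / m))) ≤ t := by
  interval_cases m
  · exact qk_rect_le 1 1 1 1 0 base1 step1 (by decide) (by decide) (by decide) (by decide)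
      (by decide +kernel) (by decide) (by decide +kernel) t (Nat.zero_le t)
  · exact qk_rect_le 2 4 2 8 0 base2 step2 (by decide) (by decide) (by decide) (by decide)
      (by decide +kernel) (by decide) (by decide +kernel) t (Nat.zero_le t)
  · exact qk_rect_le 3 9 4 20 0 base3 step3 (by decide) (by decide) (by decide) (by decide)
      (by decide +kernel) (by decide) (by decide +kernel) t (Nat.zero_le t)
  · exact qk_rect_le 4 16 4 32 0 base4 step4 (by decide) (by decide) (by decide) (by decide)
      (by decide +kernel) (by decide) (by decide +kernel) t (Nat.zero_le t)
  · exact qk_rect_le 5 10 24 20 0 base5 step5 (by decide) (by decide) (by decide) (by decide)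
      (by decide +kernel) (by decide) (by decide +kernel) t (Nat.zero_le t)

theorem qk_rect_le_six (t : ℕ) (ht : 9 ≤ t) :
    qk 2 (diag (List.replicate 6 (T2 t / 6))) ≤ t :=
  qk_rect_le 6 12 6 24 9 base6 step6 (by decide) (by decide) (by decide) (by decide)
    (by decide +kernel) (by decide) (by decide +kernel) t ht

theorem qk_univ_eq_diag (κ ν : Type*) [LinearOrder κ] [LinearOrder ν] [Fintype κ] [Fintype ν] :
    qk 2 (Finset.univ : Finset (κ × ν)) =
      qk 2 (diag (List.replicate (Fintype.card κ) (Fintype.card ν))) := by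
  let e := (Fintype.orderIsoFinOfCardEq κ rfl).symm
  let g := (Fintype.orderIsoFinOfCardEq ν rfl).symm
  let f : κ × ν ↪o ℕ × ℕ := OrderEmbedding.ofMapLEIff (fun x => ((e x.1 : ℕ), (g x.2 : ℕ))) (by
    intro a b
    simp [Prod.le_def])
  rw [← qk_two_map f]
  congr 1
  ext ⟨r, c⟩
  rw [mem_diag, Finset.mem_map]
  constructor
  · rintro ⟨⟨x, y⟩, -, h⟩
    have h1 : (e x : ℕ) = r := congrArg Prod.fst h
    have h2 : (g y : ℕ) = c := congrArg Prod.snd h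
    have h3 := (e x).isLt
    have h4 := (g y).isLt
    rw [h1] at h3
    rw [h2] at h4
    simpa [List.getD, h3] using h4
  · intro h
    have hr : r < Fintype.card κ := by
      by_contra hr
      simp [List.getD, hr] at h
    have hc : c < Fintype.card ν := by simpa [List.getD, hr] using h
    refine ⟨(e.symm ⟨r, hr⟩, g.symm ⟨c, hc⟩), Finset.mem_univ _, ?_⟩
    show ((e (e.symm ⟨r, hr⟩) : ℕ), (g (g.symm ⟨c, hc⟩) : ℕ)) = (r, c)
    simp

theorem qk_univ_swap (κ ν : Type*) [LinearOrder κ] [LinearOrder ν] [Fintype κ] [Fintype ν] :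
    qk 2 (Finset.univ : Finset (κ × ν)) = qk 2 (Finset.univ : Finset (ν × κ)) := by
  rw [← qk_two_map (OrderIso.prodComm (α := κ) (β := ν)).toOrderEmbedding]
  congr 1
  ext x
  simp only [Finset.mem_map, Finset.mem_univ, true_and, iff_true]
  exact ⟨x.swap, by simp⟩

theorem tau2_le_qk (κ ν : Type*) [LinearOrder κ] [LinearOrder ν] [Fintype κ] [Fintype ν] :
    tau2 (Fintype.card κ * Fintype.card ν) ≤ qk 2 (Finset.univ : Finset (κ × ν)) := by
  rw [tau2_le_iff, ← Fintype.card_prod, ← Finset.card_univ]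
  exact card_le_T2 _ _ le_rfl

theorem qk_le_tau2_of_le_five (κ ν : Type*) [LinearOrder κ] [LinearOrder ν] [Fintype κ]
    [Fintype ν] (h : Fintype.card κ ≤ 5) :
    qk 2 (Finset.univ : Finset (κ × ν)) ≤ tau2 (Fintype.card κ * Fintype.card ν) := by
  rw [qk_univ_eq_diag]
  rcases Nat.eq_zero_or_pos (Fintype.card κ) with h0 | h0
  · have hd : diag (List.replicate (Fintype.card κ) (Fintype.card ν)) = ∅ := by
      rw [← Finset.card_eq_zero, card_diag, h0]
      simp
    rw [hd]
    exact ((qk_two_le_zero _).mpr rfl).trans (Nat.zero_le _)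
  · refine qk_rect_mono ?_ (qk_rect_le_five h h0 _)
    rw [Nat.le_div_iff_mul_le h0, mul_comm]
    exact (tau2_le_iff _ _).mp le_rfl

/-- The upper bound when the first factor has at most six elements. Six rows and at most five
columns are handled by exchanging the factors. -/
theorem qk_le_of_le_six (κ ν : Type*) [LinearOrder κ] [LinearOrder ν] [Fintype κ]
    [Fintype ν] (h : Fintype.card κ ≤ 6) (hne : ¬ (Fintype.card κ = 6 ∧ Fintype.card ν = 6)) :
    qk 2 (Finset.univ : Finset (κ × ν)) ≤ tau2 (Fintype.card κ * Fintype.card ν) := by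
  by_cases h5 : Fintype.card κ ≤ 5
  · exact qk_le_tau2_of_le_five κ ν h5
  by_cases h5' : Fintype.card ν ≤ 5
  · rw [qk_univ_swap, mul_comm]
    exact qk_le_tau2_of_le_five ν κ h5'
  have hk : Fintype.card κ = 6 := by omega
  have hT := (tau2_le_iff (6 * Fintype.card ν) _).mp le_rfl
  have h9 : 9 ≤ tau2 (6 * Fintype.card ν) := by
    by_contra h9
    -- More than six columns give more than `T2 8 = 36` cells.
    have : 6 * Fintype.card ν ≤ T2 8 := (tau2_le_iff _ _).mp (by omega)
    have h8 : T2 8 = 36 := rfl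
    omega
  rw [qk_univ_eq_diag, hk]
  refine qk_rect_mono ?_ (qk_rect_le_six _ h9)
  omega

theorem q2_prod_linear {κ ν : Type*} [LinearOrder κ] [LinearOrder ν]
    [Fintype κ] [Fintype ν] (h : Fintype.card κ ≤ 6 ∨ Fintype.card ν ≤ 6) :
    qk 2 (Finset.univ : Finset (κ × ν)) =
      if Fintype.card κ = 6 ∧ Fintype.card ν = 6 then 9
      else tau2 (Fintype.card κ * Fintype.card ν) := by
  split_ifs with h6
  · rw [qk_univ_eq_diag, h6.1, h6.2]
    exact le_antisymm (qk_rect_mono (by decide) (qk_rect_le_six 9 le_rfl)) nine_le_qk_six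
  · refine le_antisymm ?_ (tau2_le_qk κ ν)
    rcases h with h | h
    · exact qk_le_of_le_six κ ν h h6
    · rw [qk_univ_swap, mul_comm]
      exact qk_le_of_le_six ν κ h fun h' => h6 h'.symm
end
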